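/- Let τ be a nonnegative integer and let n be a positive integer. Let x, x̃ ∈ ℤⁿ be two integer vectors, set r = x − x̃ (componentwise), let r̂ be obtained by applying the uniform quantizer Q_τ componentwise to r, and set x̂ = x̃ + r̂. Then the ℓ∞ reconstruction error satisfies max_{1≤i≤n} |x_i − x̂_i| ≤ τ; that is, the near-lossless reconstruction x̂ obeys the tight per-pixel error bound ‖x − x̂‖_∞ ≤ τ. -/

import Mathlib

/-- The uniform quantizer `Q_τ(x) = sgn(x)·(2τ+1)·⌊(|x|+τ)/(2τ+1)⌋`. -/
def uniformQuantizer (τ : ℕ) (x : ℤ) : ℤ :=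
  x.sign * ((2 * (τ : ℤ) + 1) * ((|x| + (τ : ℤ)) / (2 * (τ : ℤ) + 1)))

theorem abs_sub_uniformQuantizer_le (τ : ℕ) (x : ℤ) :
    |x - uniformQuantizer τ x| ≤ (τ : ℤ) := by
  unfold uniformQuantizer
  have h1 := Int.mul_ediv_add_emod (|x| + (τ : ℤ)) (2 * (τ : ℤ) + 1)
  have h2 := Int.emod_nonneg (|x| + (τ : ℤ)) (b := 2 * (τ : ℤ) + 1) (by omega)
  have h3 := Int.emod_lt_of_pos (|x| + (τ : ℤ)) (b := 2 * (τ : ℤ) + 1) (by omega)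
  generalize (2 * (τ : ℤ) + 1) * ((|x| + (τ : ℤ)) / (2 * (τ : ℤ) + 1)) = q at *
  generalize (|x| + (τ : ℤ)) % (2 * (τ : ℤ) + 1) = m at *
  rw [abs_le]
  rcases lt_trichotomy x 0 with h | h | h
  · rw [Int.sign_eq_neg_one_of_neg h]
    rw [abs_of_neg h] at h1
    constructor <;> omega
  · subst h
    simp
  · rw [Int.sign_eq_one_of_pos h]
    rw [abs_of_pos h] at h1
    constructor <;> omega

/-- Near-lossless reconstruction error bound: if `r = x − x̃`, `r̂` is the
componentwise uniform quantization of `r`, and `x̂ = x̃ + r̂`, then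
`‖x − x̂‖_∞ = max_i |x_i − x̂_i| ≤ τ`. -/
theorem nearLossless_linf_bound (τ n : ℕ) (hn : 0 < n)
    (x xt r rhat xhat : Fin n → ℤ)
    (hr : r = x - xt)
    (hrhat : ∀ i : Fin n, rhat i = uniformQuantizer τ (r i))
    (hxhat : xhat = xt + rhat) :
    Finset.univ.sup' (Finset.univ_nonempty_iff.mpr ⟨⟨0, hn⟩⟩)
      (fun i : Fin n => |x i - xhat i|) ≤ (τ : ℤ) := by
  refine Finset.sup'_le _ _ fun i _ => ?_
  have h := abs_sub_uniformQuantizer_le τ (r i)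
  rw [← hrhat i] at h
  have e : x i - xhat i = r i - rhat i := by
    subst hxhat hr
    simp only [Pi.add_apply, Pi.sub_apply]
    ring
  rw [e]
  exact h
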